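/- Assume b ≡ 0 and λ = 0, and let (V, x1*, x2*) be a nontrivial solution of the free boundary problem (2.11)–(2.14). Then there exists a function Ṽ : ℝ → ℝ with Ṽ ≠ V such that: Ṽ is the difference of two convex functions; Ṽ = 0 on ℝ ∖ (x1*, x2*); Ṽ is continuously differentiable on [x1*, x2*] with Ṽ′(x1*) = Ṽ′(x2*) = 0; Ṽ′ is differentiable at Lebesgue-a.e. point of (x1*, x2*) and (σ²(x)/2)·Ṽ″(x) = −f(x) for Lebesgue-a.e. x ∈ (x1*, x2*); but Ṽ′ is not absolutely continuous on [x1*, x2*]. In particular, the free boundary problem (2.12)–(2.14) without condition (2.11) does not have a unique nontrivial solution. -/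

import Mathlib

/-! The solution is perturbed by a primitive of a singular function. Let `C` be continuous on
`ℝ`, zero outside `(x1, x2)`, not identically zero, a difference of monotone functions, with
integral `0` and `C' = 0` almost everywhere (`exists_singular_perturbation`; it is assembled
from four rescaled copies of a singular distribution function carried by the Cantor set). Put
`Vt x = V x + ∫ t in x1..x, C t`, so that `Vt' = V' + C`. The equation for the second derivative
holds almost everywhere as before, and `Vt` still vanishes outside `(x1, x2)` because `C` has
integral `0`.

If `Vt'` were absolutely continuous, so would be `C = Vt' - V'`; having zero derivative almost
everywhere, `C` would be constant, hence zero. Finally `V'` is absolutely continuous, so it has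
bounded variation; thus `Vt` is a primitive of a difference of two monotone functions, and
primitives of monotone functions are convex (`convexOn_integral_of_monotone`). -/

open MeasureTheory Set Filter

noncomputable section

def LocBddAt (F : ℝ → ℝ) (x : ℝ) : Prop :=
  ∃ ε > 0, ∃ C : ℝ, ∀ y ∈ Set.Ioo (x - ε) (x + ε), |F y| ≤ C

/-- shape of `f` as in Figure 1 -/
def Shape (f : ℝ → ℝ) (x1l x1r x2l x2r : ℝ) : Prop :=
  x1l ≤ x1r ∧ x1r < x2l ∧ x2l ≤ x2r ∧
  (∀ x ∈ Set.Ioo x1r x2l, 0 < f x) ∧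
  (∀ x ∈ Set.Icc x1l x1r ∪ Set.Icc x2l x2r, f x = 0) ∧
  (∀ x ∈ Set.Iio x1l ∪ Set.Ioi x2r, f x < 0)

/-- condition (2.3) -/
def Cond23 (f σ : ℝ → ℝ) (x1l x1r x2l x2r : ℝ) : Prop :=
  LocallyIntegrable (fun x => f x / (σ x) ^ 2) volume ∧
  ∀ x ∉ Set.Icc x1l x1r ∪ Set.Icc x2l x2r, LocBddAt (fun y => 1 / f y) x

/-- classical ε-δ absolute continuity of `F` on `[a,b]` -/
def AbsCont (F : ℝ → ℝ) (a b : ℝ) : Prop :=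
  ∀ ε > 0, ∃ δ > 0, ∀ n : ℕ, ∀ s t : Fin n → ℝ,
    (∀ i, a ≤ s i ∧ s i ≤ t i ∧ t i ≤ b) →
    (Pairwise fun i j => Disjoint (Set.Ioo (s i) (t i)) (Set.Ioo (s j) (t j))) →
    (∑ i, (t i - s i)) < δ → (∑ i, |F (t i) - F (s i)|) < ε

/-- a solution of the free boundary problem (2.11)–(2.14) in the case `b ≡ 0`, `λ = 0`:
`V = 0` outside `(x1, x2)`, `V ∈ C¹([x1, x2])` with `V′(x1) = V′(x2) = 0`,
`V′` absolutely continuous on `[x1, x2]`, and `(σ²/2)·V″ = −f` Lebesgue-a.e.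
on `(x1, x2)`, where `V″` is the a.e.-defined derivative of `V′`. -/
def SolFBPZero (σ f V : ℝ → ℝ) (x1 x2 : ℝ) : Prop :=
  x1 < x2 ∧
  (∀ x ∉ Set.Ioo x1 x2, V x = 0) ∧
  ∃ V' : ℝ → ℝ,
    (∀ x ∈ Set.Icc x1 x2, HasDerivWithinAt V (V' x) (Set.Icc x1 x2) x) ∧
    ContinuousOn V' (Set.Icc x1 x2) ∧
    V' x1 = 0 ∧ V' x2 = 0 ∧
    AbsCont V' x1 x2 ∧
    ∀ᵐ x, x ∈ Set.Ioo x1 x2 → ∃ d, HasDerivAt V' d x ∧ (σ x) ^ 2 / 2 * d = -f x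

/-! ### Absolute continuity -/

/-- Reduces `AbsCont` to Mathlib's notion, which allows unordered endpoints and asks for
disjoint half-open intervals. -/
lemma AbsCont.absolutelyContinuousOnInterval {F : ℝ → ℝ} {a b : ℝ} (hab : a ≤ b)
    (h : AbsCont F a b) : AbsolutelyContinuousOnInterval F a b := by
  rw [absolutelyContinuousOnInterval_iff]
  intro ε hε
  obtain ⟨δ, hδ, H⟩ := h ε hε
  refine ⟨δ, hδ, ?_⟩
  rintro ⟨n, I⟩ ⟨hI, hdisj⟩ hlen
  have hlen' : (∑ i : Fin n, (max (I i).1 (I i).2 - min (I i).1 (I i).2)) < δ := by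
    rw [Finset.sum_range] at hlen
    convert hlen using 2 with i
    rw [Real.dist_eq, max_sub_min_eq_abs, abs_sub_comm]
  have := H n (fun i => min (I i).1 (I i).2) (fun i => max (I i).1 (I i).2) ?_ ?_ hlen'
  · rw [Finset.sum_range]
    convert this using 2 with i
    rw [Real.dist_eq]
    rcases le_total (I i).1 (I i).2 with hle | hle
    · simp [hle, abs_sub_comm]
    · simp [hle]
  · intro i
    have := hI i (by simp)
    rw [uIcc_of_le hab] at this
    exact ⟨le_min this.1.1 this.2.1, min_le_max, max_le this.1.2 this.2.2⟩
  · intro i j hij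
    have := hdisj (by simp : (i : ℕ) ∈ (Finset.range n : Set ℕ))
      (by simp : (j : ℕ) ∈ (Finset.range n : Set ℕ)) (fun h => hij (Fin.ext h))
    exact this.mono Ioo_subset_Ioc_self Ioo_subset_Ioc_self

/-! ### A singular continuous function -/

/-- By self-similarity, the volume `v` of the Cantor set satisfies `v ≤ v / 3 + v / 3`. -/
lemma volume_cantorSet : volume cantorSet = 0 := by
  have hfin : volume cantorSet ≠ ⊤ :=
    (isCompact_cantorSet.measure_lt_top).ne
  have h1 : volume ((· / 3) '' cantorSet) = ENNReal.ofReal 3⁻¹ * volume cantorSet := by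
    have := Measure.addHaar_smul volume (3⁻¹ : ℝ) cantorSet
    rw [← image_smul] at this
    simp only [Module.finrank_self, pow_one, abs_of_pos (by norm_num : (0 : ℝ) < 3⁻¹)] at this
    rw [← this]
    congr 2
    ext x
    simp [div_eq_inv_mul]
  have h2 : volume ((fun x => (2 + x) / 3) '' cantorSet)
      = ENNReal.ofReal 3⁻¹ * volume cantorSet := by
    rw [← h1]
    have : (fun x : ℝ => (2 + x) / 3) '' cantorSet
        = (fun x => 2 / 3 + x) '' ((· / 3) '' cantorSet) := by
      rw [image_image]
      congr 1
      ext x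
      ring
    rw [this, image_add_left, measure_preimage_add]
  have hle : volume cantorSet ≤
      ENNReal.ofReal 3⁻¹ * volume cantorSet + ENNReal.ofReal 3⁻¹ * volume cantorSet := by
    conv_lhs => rw [cantorSet_eq_union_halves]
    exact (measure_union_le _ _).trans_eq (by rw [h1, h2])
  lift volume cantorSet to NNReal using hfin with v
  have hle' : (v : ℝ) ≤ 3⁻¹ * v + 3⁻¹ * v := by
    have := ENNReal.toReal_mono (by finiteness) hle
    rwa [ENNReal.toReal_add (by finiteness) (by finiteness), ENNReal.toReal_mul,
      ENNReal.toReal_ofReal (by norm_num), ENNReal.coe_toReal] at this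
  have : v = 0 := by
    apply le_antisymm _ zero_le
    rw [← NNReal.coe_le_coe, NNReal.coe_zero]
    linarith
  simp [this]

lemma not_countable_cantorSet : ¬ Countable cantorSet := by
  intro h
  have : Countable (ℕ → Bool) := cantorSetHomeomorphNatToBool.symm.toEquiv.countable_iff.mpr h
  have h2 : Countable (Set ℕ) :=
    (Equiv.arrowCongr (Equiv.refl ℕ) Equiv.propEquivBool).countable_iff.mpr this
  obtain ⟨u, hu⟩ := exists_surjective_nat (Set ℕ)
  exact Function.cantor_surjective u hu

/-- The push-forward of Lebesgue measure on `[0, 1]` under a Borel isomorphism of `ℝ` with the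
Cantor set. -/
lemma exists_singular_measure : ∃ μ : Measure ℝ, IsProbabilityMeasure μ ∧ NullSingletonClass μ ∧
    μ cantorSetᶜ = 0 := by
  have hm : MeasurableSet cantorSet := isClosed_cantorSet.measurableSet
  have : StandardBorelSpace cantorSet := hm.standardBorel
  let e : ℝ ≃ᵐ cantorSet := PolishSpace.measurableEquivOfNotCountable
    (not_countable_iff.mpr inferInstance) not_countable_cantorSet
  let g : ℝ → ℝ := fun x => (e x : ℝ)
  have hg : Measurable g := measurable_subtype_coe.comp e.measurable
  have hinj : Function.Injective g := Subtype.val_injective.comp e.injective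
  have : IsProbabilityMeasure (volume.restrict (Icc (0 : ℝ) 1)) := ⟨by simp⟩
  refine ⟨(volume.restrict (Icc (0 : ℝ) 1)).map g,
    Measure.isProbabilityMeasure_map hg.aemeasurable, ⟨fun x => ?_⟩, ?_⟩
  · rw [Measure.map_apply hg (measurableSet_singleton x)]
    exact (Set.subsingleton_singleton.preimage hinj).measure_zero _
  · rw [Measure.map_apply hg hm.compl]
    have : g ⁻¹' cantorSetᶜ = ∅ := by
      ext x
      simp [g]
    simp [this]

/-- The distribution function of an atomless probability measure carried by the Cantor set:
a continuous monotone function that climbs from `0` to `1` although its derivative vanishes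
almost everywhere. -/
lemma exists_singular_function : ∃ F : ℝ → ℝ, Monotone F ∧ Continuous F ∧
    (∀ x ≤ 0, F x = 0) ∧ (∀ x, 1 ≤ x → F x = 1) ∧ ∀ᵐ x, HasDerivAt F 0 x := by
  obtain ⟨μ, hμ, hna, hc⟩ := exists_singular_measure
  have hm : MeasurableSet cantorSet := isClosed_cantorSet.measurableSet
  refine ⟨ProbabilityTheory.cdf μ, ProbabilityTheory.monotone_cdf μ, ?_, ?_, ?_, ?_⟩
  · rw [continuous_iff_continuousAt]
    intro x
    have hmono := ProbabilityTheory.monotone_cdf μ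
    rw [hmono.continuousAt_iff_leftLim_eq_rightLim, StieltjesFunction.rightLim_eq]
    have h := (ProbabilityTheory.cdf μ).measure_singleton x
    rw [ProbabilityTheory.measure_cdf, measure_singleton, eq_comm,
      ENNReal.ofReal_eq_zero] at h
    exact le_antisymm (hmono.leftLim_le le_rfl) (by linarith)
  · intro x hx
    rw [ProbabilityTheory.cdf_eq_real, measureReal_eq_zero_iff]
    have hsub : Iic x ⊆ {0} ∪ cantorSetᶜ := by
      intro y hy
      by_cases hyc : y ∈ cantorSet
      · exact Or.inl (le_antisymm (le_trans hy hx) (cantorSet_subset_unitInterval hyc).1)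
      · exact Or.inr hyc
    exact measure_mono_null hsub (measure_union_null (measure_singleton 0) hc)
  · intro x hx
    have hsub : (Iic x)ᶜ ⊆ cantorSetᶜ := by
      intro y hy hyc
      exact hy ((cantorSet_subset_unitInterval hyc).2.trans hx)
    rw [ProbabilityTheory.cdf_eq_real, measureReal_def,
      (prob_compl_eq_zero_iff measurableSet_Iic).mp (measure_mono_null hsub hc)]
    simp
  · have hsing : μ ⟂ₘ volume := by
      refine ⟨cantorSetᶜ, hm.compl, hc, ?_⟩
      rw [compl_compl, volume_cantorSet]
    have h := (ProbabilityTheory.cdf μ).ae_hasDerivAt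
    rw [ProbabilityTheory.measure_cdf] at h
    filter_upwards [h, hsing.rnDeriv_ae_eq_zero] with x hx h0
    simpa [h0] using hx

lemma ae_comp_affine {P : ℝ → Prop} (hP : ∀ᵐ y, P y) {c : ℝ} (hc : c ≠ 0) (d : ℝ) :
    ∀ᵐ x : ℝ, P (c * x - d) := by
  rw [ae_iff] at hP ⊢
  have h1 : volume ((fun x : ℝ => x + (-d)) ⁻¹' {y | ¬ P y}) = 0 := by
    rw [measure_preimage_add_right, hP]
  have h2 := Real.volume_preimage_mul_left hc ((fun x : ℝ => x + (-d)) ⁻¹' {y | ¬ P y})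
  rw [h1, mul_zero] at h2
  exact h2

/-- A singular perturbation of a derivative. With `F` the function of
`exists_singular_function`, the bump `B y = F y - F (y - 1)` lives on `[0, 2]`, and
`y ↦ B y - B (y - 2)` lives on `[0, 4]` with integral `0`; this is rescaled to `[a, b]`. -/
lemma exists_singular_perturbation {a b : ℝ} (hab : a < b) : ∃ C P Q : ℝ → ℝ,
    Continuous C ∧ Monotone P ∧ Monotone Q ∧ (∀ x, C x = P x - Q x) ∧
    (∀ x ≤ a, C x = 0) ∧ (∀ x, b ≤ x → C x = 0) ∧ (∫ x in a..b, C x = 0) ∧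
    (∃ x ∈ Icc a b, C x ≠ 0) ∧ ∀ᵐ x, HasDerivAt C 0 x := by
  obtain ⟨F, hmono, hcont, h0, h1, hder⟩ := exists_singular_function
  have hba : 0 < b - a := sub_pos.mpr hab
  set c : ℝ := 4 / (b - a) with hc
  have hcpos : 0 < c := by positivity
  have hcba : c * b = c * a + 4 := by
    rw [hc]
    field_simp
    ring
  have hmonoF : ∀ d, Monotone fun x => F (c * x - d) := fun d x y hxy => hmono (by gcongr)
  have hderF : ∀ d, ∀ᵐ x, HasDerivAt (fun x => F (c * x - d)) 0 x := by
    intro d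
    filter_upwards [ae_comp_affine hder hcpos.ne' d] with x hx
    have := hx.comp x (((hasDerivAt_id x).const_mul c).sub_const d)
    simpa [Function.comp_def] using this
  let B : ℝ → ℝ := fun y => F y - F (y - 1)
  have hB : Continuous B := by fun_prop
  have hB0 : ∀ y ≤ 0, B y = 0 := fun y hy => by
    simp only [B, h0 y hy, h0 (y - 1) (by linarith), sub_self]
  have hB2 : ∀ y, 2 ≤ y → B y = 0 := fun y hy => by
    simp only [B, h1 y (by linarith), h1 (y - 1) (by linarith), sub_self]
  let D : ℝ → ℝ := fun y => B y - B (y - 2)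
  have hD : Continuous D := by fun_prop
  have hDint : ∫ y in (0 : ℝ)..4, D y = 0 := by
    have hi : ∀ u v, IntervalIntegrable B volume u v := fun u v => hB.intervalIntegrable u v
    have e1 : ∫ y in (0 : ℝ)..4, B y = ∫ y in (0 : ℝ)..2, B y := by
      rw [← intervalIntegral.integral_add_adjacent_intervals (hi 0 2) (hi 2 4),
        intervalIntegral.integral_congr (a := 2) (g := fun _ => 0), intervalIntegral.integral_zero,
        add_zero]
      intro y hy
      rw [uIcc_of_le (by norm_num)] at hy
      exact hB2 y hy.1
    have e2 : ∫ y in (0 : ℝ)..4, B (y - 2) = ∫ y in (0 : ℝ)..2, B y := by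
      rw [intervalIntegral.integral_comp_sub_right,
        ← intervalIntegral.integral_add_adjacent_intervals (hi _ 0) (hi 0 _),
        intervalIntegral.integral_congr (a := 0 - 2) (g := fun _ => 0),
        intervalIntegral.integral_zero, zero_add]
      · norm_num
      intro y hy
      rw [uIcc_of_le (by norm_num)] at hy
      exact hB0 y hy.2
    have hi2 : IntervalIntegrable (fun y => B (y - 2)) volume 0 4 :=
      (hB.comp (continuous_sub_right 2)).intervalIntegrable 0 4
    simp only [D]
    rw [intervalIntegral.integral_sub (hi 0 4) hi2, e1, e2, sub_self]
  have hCD : ∀ x, D (c * x - c * a) =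
      (F (c * x - c * a) + F (c * x - (c * a + 3)))
        - (F (c * x - (c * a + 1)) + F (c * x - (c * a + 2))) := by
    intro x
    simp only [D, B]
    rw [show c * x - c * a - 2 - 1 = c * x - (c * a + 3) by ring,
      show c * x - c * a - 2 = c * x - (c * a + 2) by ring,
      show c * x - c * a - 1 = c * x - (c * a + 1) by ring]
    ring
  refine ⟨fun x => D (c * x - c * a),
    fun x => F (c * x - c * a) + F (c * x - (c * a + 3)),
    fun x => F (c * x - (c * a + 1)) + F (c * x - (c * a + 2)),
    by fun_prop, (hmonoF _).add (hmonoF _), (hmonoF _).add (hmonoF _), hCD,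
    fun x hx => ?_, fun x hx => ?_, ?_, ⟨a + 1 / c, ⟨?_, ?_⟩, ?_⟩, ?_⟩
  · have : c * x ≤ c * a := by gcongr
    simp only [D]
    rw [hB0 _ (by linarith), hB0 _ (by linarith), sub_self]
  · have : c * b ≤ c * x := by gcongr
    simp only [D]
    rw [hB2 _ (by linarith), hB2 _ (by linarith), sub_self]
  · rw [intervalIntegral.integral_comp_mul_sub D hcpos.ne', sub_self,
      show c * b - c * a = 4 by linarith, hDint, smul_zero]
  · have : 0 < 1 / c := by positivity
    linarith
  · rw [hc, one_div_div]
    linarith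
  · have : c * (a + 1 / c) - c * a = 1 := by field_simp; ring
    simp only [this, D, B]
    rw [h1 1 le_rfl, h0 _ (by norm_num), h0 _ (by norm_num), h0 _ (by norm_num)]
    norm_num
  · filter_upwards [hderF (c * a), hderF (c * a + 1), hderF (c * a + 2), hderF (c * a + 3)]
      with x k0 k1 k2 k3
    have := (k0.add k3).sub (k1.add k2)
    simp only [add_zero, sub_zero] at this
    refine this.congr_of_eventuallyEq (Eventually.of_forall fun y => ?_)
    simp [hCD]

/-! ### Differences of convex functions -/

lemma convexOn_integral_of_monotone {p : ℝ → ℝ} (hp : Monotone p) (a : ℝ) :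
    ConvexOn ℝ univ fun x => ∫ t in a..x, p t := by
  have hi : ∀ u v, IntervalIntegrable p volume u v := fun u v => hp.intervalIntegrable
  apply convexOn_of_slope_mono_adjacent convex_univ
  intro x y z _ _ hxy hyz
  rw [intervalIntegral.integral_interval_sub_left (hi _ _) (hi _ _),
    intervalIntegral.integral_interval_sub_left (hi _ _) (hi _ _)]
  -- Both slopes are compared with the value of `p` at the middle point.
  calc (∫ t in x..y, p t) / (y - x) ≤ p y := by
        rw [div_le_iff₀ (sub_pos.mpr hxy)]
        have := intervalIntegral.integral_mono_on hxy.le (hi x y)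
          (intervalIntegrable_const (c := p y)) fun t ht => hp ht.2
        simpa [mul_comm] using this
    _ ≤ (∫ t in y..z, p t) / (z - y) := by
        rw [le_div_iff₀ (sub_pos.mpr hyz)]
        have := intervalIntegral.integral_mono_on hyz.le
          (intervalIntegrable_const (c := p y)) (hi y z) fun t ht => hp ht.1
        simpa [mul_comm] using this

/-- If `V` vanishes outside `(a, b)` and is `C¹` on `[a, b]` with flat ends, then `V` is on all
of `ℝ` the primitive of the extension of `V'` that is constant, hence zero, outside `[a, b]`. -/
lemma eq_integral_projIcc {V V' : ℝ → ℝ} {a b : ℝ} (hab : a < b)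
    (hV0 : ∀ x ∉ Ioo a b, V x = 0)
    (hd : ∀ x ∈ Icc a b, HasDerivWithinAt V (V' x) (Icc a b) x)
    (hc : ContinuousOn V' (Icc a b)) (ha : V' a = 0) (hb : V' b = 0) (x : ℝ) :
    V x = ∫ t in a..x, V' (projIcc a b hab.le t) := by
  set U : ℝ → ℝ := fun t => V' (projIcc a b hab.le t) with hU
  have hUc : Continuous U :=
    (continuousOn_iff_continuous_domRestrict.mp hc).comp continuous_projIcc
  have hi : ∀ u v, IntervalIntegrable U volume u v := fun u v => hUc.intervalIntegrable u v
  have hUout : ∀ t ∉ Ioo a b, U t = 0 := by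
    intro t ht
    rcases le_or_gt t a with h | h
    · simp [hU, projIcc_of_le_left _ h, ha]
    · have : b ≤ t := not_lt.mp fun h' => ht ⟨h, h'⟩
      simp [hU, projIcc_of_right_le _ this, hb]
  have key : ∀ y ∈ Icc a b, ∫ t in a..y, U t = V y := by
    intro y hy
    rw [intervalIntegral.integral_eq_sub_of_hasDerivAt_of_le hy.1 (f := V) _ _ (hi a y),
      hV0 a (by simp), sub_zero]
    · exact fun t ht => ((hd t ⟨ht.1, ht.2.trans hy.2⟩).continuousWithinAt).mono
        (Icc_subset_Icc_right hy.2)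
    · intro t ht
      have ht' : t ∈ Ioo a b := ⟨ht.1, ht.2.trans_le hy.2⟩
      have := (hd t (Ioo_subset_Icc_self ht')).hasDerivAt (Icc_mem_nhds ht'.1 ht'.2)
      simpa [hU, projIcc_of_mem hab.le (Ioo_subset_Icc_self ht')] using this
  rcases le_or_gt x a with hxa | hxa
  · rw [hV0 x (fun h => absurd h.1 (not_lt.mpr hxa)),
      intervalIntegral.integral_congr (g := fun _ => 0), intervalIntegral.integral_zero]
    intro t ht
    rw [uIcc_of_ge hxa] at ht
    exact hUout t fun h => absurd h.1 (not_lt.mpr ht.2)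
  rcases le_or_gt x b with hxb | hxb
  · exact (key x ⟨hxa.le, hxb⟩).symm
  · rw [hV0 x (fun h => absurd h.2 (not_lt.mpr hxb.le)),
      ← intervalIntegral.integral_add_adjacent_intervals (hi a b) (hi b x),
      key b ⟨hab.le, le_rfl⟩, hV0 b (by simp), zero_add,
      intervalIntegral.integral_congr (g := fun _ => 0), intervalIntegral.integral_zero]
    intro t ht
    rw [uIcc_of_le hxb.le] at ht
    exact hUout t fun h => absurd h.2 (not_lt.mpr ht.1)

/-- Case `b ≡ 0`, `λ = 0`: if `(V, x1*, x2*)` is a nontrivial solution of (2.11)–(2.14),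
then there is `Ṽ ≠ V` which is a difference of two convex functions, vanishes outside
`(x1*, x2*)`, is `C¹` on `[x1*, x2*]` with `Ṽ′(x1*) = Ṽ′(x2*) = 0`, whose derivative `Ṽ′`
is differentiable a.e. on `(x1*, x2*)` with `(σ²/2)·Ṽ″ = −f` a.e. there, but `Ṽ′` is not
absolutely continuous on `[x1*, x2*]`.  Hence (2.12)–(2.14) without (2.11) has no
uniqueness of nontrivial solutions. -/
theorem non_uniqueness_without_AC
    (σ f : ℝ → ℝ) (hmσ : Measurable σ) (hmf : Measurable f) (hσ : ∀ x, σ x ≠ 0)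
    (hσint : LocallyIntegrable (fun x => 1 / (σ x) ^ 2) volume)
    (x1l x1r x2l x2r : ℝ) (hf : Shape f x1l x1r x2l x2r)
    (h23 : Cond23 f σ x1l x1r x2l x2r)
    (V : ℝ → ℝ) (x1 x2 : ℝ)
    (hsol : SolFBPZero σ f V x1 x2) (hnt : ∃ x, V x ≠ 0) :
    ∃ Vt : ℝ → ℝ, Vt ≠ V ∧
      (∃ φ ψ : ℝ → ℝ, ConvexOn ℝ Set.univ φ ∧ ConvexOn ℝ Set.univ ψ ∧
        ∀ x, Vt x = φ x - ψ x) ∧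
      (∀ x ∉ Set.Ioo x1 x2, Vt x = 0) ∧
      ∃ W' : ℝ → ℝ,
        (∀ x ∈ Set.Icc x1 x2, HasDerivWithinAt Vt (W' x) (Set.Icc x1 x2) x) ∧
        ContinuousOn W' (Set.Icc x1 x2) ∧
        W' x1 = 0 ∧ W' x2 = 0 ∧
        (∀ᵐ x, x ∈ Set.Ioo x1 x2 → ∃ d, HasDerivAt W' d x ∧ (σ x) ^ 2 / 2 * d = -f x) ∧
        ¬ AbsCont W' x1 x2 := by
  obtain ⟨h12, hV0, V', hVd, hVc, hV1, hV2, hVac, hVode⟩ := hsol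
  have hac := hVac.absolutelyContinuousOnInterval h12.le
  obtain ⟨C, P, Q, hCc, hP, hQ, hCPQ, hCl, hCr, hCint, ⟨z, hz, hCz⟩, hCd⟩ :=
    exists_singular_perturbation h12
  have hCi : ∀ u v, IntervalIntegrable C volume u v := fun u v => hCc.intervalIntegrable u v
  have hprim : ∀ x, HasDerivAt (fun x => ∫ t in x1..x, C t) (C x) x := fun x =>
    intervalIntegral.integral_hasDerivAt_right (hCi _ _)
      hCc.stronglyMeasurable.stronglyMeasurableAtFilter hCc.continuousAt
  have hVtd : ∀ x ∈ Icc x1 x2, HasDerivWithinAt (fun x => V x + ∫ t in x1..x, C t)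
      (V' x + C x) (Icc x1 x2) x := fun x hx =>
    (hVd x hx).add (hprim x).hasDerivWithinAt
  refine ⟨fun x => V x + ∫ t in x1..x, C t, ?_, ?_, ?_, fun x => V' x + C x, hVtd,
    hVc.add hCc.continuousOn, ?_, ?_, ?_, ?_⟩
  · intro heq
    have h := hVtd z hz
    rw [heq] at h
    have := (uniqueDiffOn_Icc h12 z hz).eq_deriv _ h (hVd z hz)
    exact hCz (by linarith)
  · have hbv := hac.boundedVariationOn
    rw [uIcc_of_le h12.le] at hbv
    obtain ⟨p, q, hp, hq, hpq⟩ := hbv.locallyBoundedVariationOn.exists_monotoneOn_sub_monotoneOn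
    -- Precomposing with the projection makes the two monotone parts monotone on all of `ℝ`.
    have hext : ∀ {r : ℝ → ℝ}, MonotoneOn r (Icc x1 x2) →
        Monotone fun t => r (projIcc x1 x2 h12.le t) := fun hr s t hst =>
      hr (projIcc _ _ _ s).2 (projIcc _ _ _ t).2 (monotone_projIcc h12.le hst)
    have hp' := (hext hp).add hP
    have hq' := (hext hq).add hQ
    refine ⟨_, _, convexOn_integral_of_monotone hp' x1, convexOn_integral_of_monotone hq' x1,
      fun x => ?_⟩
    have hUc : Continuous fun t => V' (projIcc x1 x2 h12.le t) :=
      (continuousOn_iff_continuous_domRestrict.mp hVc).comp continuous_projIcc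
    simp only [eq_integral_projIcc h12 hV0 hVd hVc hV1 hV2 x]
    rw [← intervalIntegral.integral_add (hUc.intervalIntegrable _ _) (hCi _ _),
      ← intervalIntegral.integral_sub hp'.intervalIntegrable hq'.intervalIntegrable]
    congr 1
    ext t
    rw [hCPQ, hpq]
    simp only [Pi.sub_apply]
    ring
  · intro x hx
    simp only [hV0 x hx, zero_add]
    rcases le_or_gt x x1 with h | h
    · rw [intervalIntegral.integral_congr (g := fun _ => 0), intervalIntegral.integral_zero]
      intro t ht
      rw [uIcc_of_ge h] at ht
      exact hCl t ht.2
    · have h2 : x2 ≤ x := not_lt.mp fun h' => hx ⟨h, h'⟩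
      rw [← intervalIntegral.integral_add_adjacent_intervals (hCi x1 x2) (hCi x2 x), hCint,
        zero_add, intervalIntegral.integral_congr (g := fun _ => 0),
        intervalIntegral.integral_zero]
      intro t ht
      rw [uIcc_of_le h2] at ht
      exact hCr t ht.1
  · simp [hV1, hCl x1 le_rfl]
  · simp [hV2, hCr x2 le_rfl]
  · filter_upwards [hVode, hCd] with x hx hCx hmem
    obtain ⟨d, hd, hode⟩ := hx hmem
    exact ⟨d, by simpa using hd.fun_add hCx, hode⟩
  · intro hW
    have hCac : AbsolutelyContinuousOnInterval C x1 x2 := by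
      have := (hW.absolutelyContinuousOnInterval h12.le).fun_sub hac
      simpa using this
    obtain ⟨k, hk⟩ := hCac.const_of_ae_hasDerivAt_zero (hCd.mono fun x hx _ => hx)
    rw [uIcc_of_le h12.le] at hk
    have hk0 : k = 0 := by rw [← hk x1 ⟨le_rfl, h12.le⟩, hCl x1 le_rfl]
    exact hCz (by rw [hk z hz, hk0])
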